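/- Let a ≤ b be real numbers, t ≥ 0, and let u : ℝ → ℝ^m be a measurable function with u_i(τ) ∈ [a,b] for all τ ∈ [0,t] and all i ∈ {1,…,m}. Let c assign a real coefficient (c,η) to every word η over X = {x₀,…,x_m}, and for each word η with n = |η| and r = |η| − |η|_{x₀} define the lower coefficient (c̲,η) = min{ (c,η)·p : p ∈ P_r(a,b) } and the upper coefficient (c̄,η) = max{ (c,η)·p : p ∈ P_r(a,b) } (with P₀(a,b) = {1}). If the family η ↦ |(c,η)| · (max{|a|,|b|,1})^{|η|} · t^{|η|}/|η|! is summable over all words η, then the three series ∑_η (c̲,η) t^{|η|}/|η|!, ∑_η (c,η) E_η[u](t), and ∑_η (c̄,η) t^{|η|}/|η|! converge absolutely and satisfy ∑_η (c̲,η) t^{|η|}/|η|! ≤ ∑_η (c,η) E_η[u](t) ≤ ∑_η (c̄,η) t^{|η|}/|η|!. -/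

import Mathlib

/-!
The core is a pointwise identity: for every word `η` of length `n` with `r` letters other than
`x₀`, and every `s ∈ [0, t]`, one has `E_η[u](s) = p * s ^ n / n!` for some `p ∈ P_r(a, b)`
(`exists_mem_intervalPow`). It follows by induction on the word. The integrand of `E_{x_i η}` at
`τ` is `q(τ) * τ ^ n / n!`, where `q(τ)` lies in the interval power belonging to `x_i η`: the letter
`x₀` contributes a factor `1`, any other letter a factor in `[a, b]`. An interval power is compact
and connected, being the continuous image of a cube, so it is the closed interval between its
least and its greatest element. Integrating the bounds on `q` therefore yields an element of the
same interval power.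

Hence `(c, η) * E_η[u](t)` is an element of `(c, η) * P_r(a, b)` times `t ^ n / n!`, and so are the
terms of the lower and the upper series, as the minimum and maximum are attained. Elements of
`P_r(a, b)` have absolute value at most `max (|a|, |b|, 1) ^ n`, so all three series are dominated by
the family assumed summable, and the inequalities hold term by term.
-/

/-- The n-th interval power P_n(a,b): the set of all products of n elements of [a,b]
(with P₀(a,b) = {1}, the empty product). -/
def intervalPow (a b : ℝ) (n : ℕ) : Set ℝ :=
  {p : ℝ | ∃ x : Fin n → ℝ, (∀ i, x i ∈ Set.Icc a b) ∧ ∏ i, x i = p}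

/-- Iterated integral E_η[u](t) associated to the word η over the alphabet
{x₀, x₁, …, x_m} (encoded as Fin (m+1), with letter 0 playing the role of x₀),
defined by E_∅[u](t) = 1 and E_{x_i η̄}[u](t) = ∫₀ᵗ u(τ)_i · E_{η̄}[u](τ) dτ.
The input u already includes the drift channel, i.e. u τ 0 is meant to be 1. -/
noncomputable def iterInt (m : ℕ) (u : ℝ → Fin (m + 1) → ℝ) :
    List (Fin (m + 1)) → ℝ → ℝ
  | [], _ => 1
  | i :: η, t => ∫ τ in (0:ℝ)..t, u τ i * iterInt m u η τ

/-- The lower coefficient (c̲,η) = min{ (c,η)·p : p ∈ P_r(a,b) } with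
r = |η| - |η|_{x₀}. -/
noncomputable def lowCoef {m : ℕ} (a b : ℝ) (c : List (Fin (m + 1)) → ℝ)
    (η : List (Fin (m + 1))) : ℝ :=
  sInf ((fun p => c η * p) '' intervalPow a b (η.length - η.count 0))

/-- The upper coefficient (c̄,η) = max{ (c,η)·p : p ∈ P_r(a,b) } with
r = |η| - |η|_{x₀}. -/
noncomputable def upCoef {m : ℕ} (a b : ℝ) (c : List (Fin (m + 1)) → ℝ)
    (η : List (Fin (m + 1))) : ℝ :=
  sSup ((fun p => c η * p) '' intervalPow a b (η.length - η.count 0))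

lemma intervalPow_eq_image (a b : ℝ) (n : ℕ) :
    intervalPow a b n =
      (fun x : Fin n → ℝ => ∏ i, x i) '' Set.univ.pi (fun _ => Set.Icc a b) := by
  ext p
  simp only [intervalPow, Set.mem_image, Set.mem_univ_pi, Set.mem_ofPred_eq]

lemma isCompact_intervalPow (a b : ℝ) (n : ℕ) : IsCompact (intervalPow a b n) := by
  rw [intervalPow_eq_image]
  exact (isCompact_univ_pi fun _ => isCompact_Icc).image (by fun_prop)

lemma ordConnected_intervalPow (a b : ℝ) (n : ℕ) : (intervalPow a b n).OrdConnected := by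
  rw [intervalPow_eq_image]
  refine IsPreconnected.ordConnected (IsPreconnected.image ?_ _ (by fun_prop))
  exact isPreconnected_univ_pi fun _ => isPreconnected_Icc

lemma intervalPow_nonempty {a b : ℝ} (hab : a ≤ b) (n : ℕ) : (intervalPow a b n).Nonempty :=
  ⟨∏ _i : Fin n, a, fun _ => a, fun _ => ⟨le_rfl, hab⟩, rfl⟩

lemma mul_mem_intervalPow {a b v p : ℝ} {n : ℕ} (hv : v ∈ Set.Icc a b)
    (hp : p ∈ intervalPow a b n) : v * p ∈ intervalPow a b (n + 1) := by
  obtain ⟨x, hx, rfl⟩ := hp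
  refine ⟨Fin.cons v x, fun i => ?_, by simp [Fin.prod_univ_succ]⟩
  refine Fin.cases ?_ (fun j => ?_) i
  · simpa using hv
  · simpa using hx j

lemma abs_le_of_mem_intervalPow {a b p : ℝ} {r n : ℕ} (hrn : r ≤ n)
    (hp : p ∈ intervalPow a b r) : |p| ≤ (max (max |a| |b|) 1) ^ n := by
  obtain ⟨x, hx, rfl⟩ := hp
  rw [Finset.abs_prod]
  calc ∏ i, |x i| ≤ ∏ _i : Fin r, max (max |a| |b|) 1 :=
        Finset.prod_le_prod (fun _ _ => abs_nonneg _)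
          (fun i _ => (abs_le_max_abs_abs (hx i).1 (hx i).2).trans (le_max_left _ _))
    _ = (max (max |a| |b|) 1) ^ r := by simp
    _ ≤ _ := pow_le_pow_right₀ (le_max_right _ _) hrn

/-- Prefixing a letter multiplies an element of the interval power of a word by the value of the
corresponding channel, which lands in the interval power of the longer word. -/
lemma input_mul_mem {m : ℕ} {a b : ℝ} {v : Fin (m + 1) → ℝ} (hv0 : v 0 = 1)
    (hv : ∀ i, i ≠ 0 → v i ∈ Set.Icc a b) (i : Fin (m + 1)) (η : List (Fin (m + 1))) {p : ℝ}
    (hp : p ∈ intervalPow a b (η.length - η.count 0)) :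
    v i * p ∈ intervalPow a b ((i :: η).length - (i :: η).count 0) := by
  by_cases hi : i = 0
  · subst hi
    simpa [hv0] using hp
  · have hlen : (i :: η).length - (i :: η).count 0 = (η.length - η.count 0) + 1 := by
      have := List.count_le_length (a := (0 : Fin (m + 1))) (l := η)
      rw [List.count_cons_of_ne hi, List.length_cons]
      omega
    rw [hlen]
    exact mul_mem_intervalPow (hv i hi) hp

lemma input_intervalIntegrable {m : ℕ} {a b t : ℝ} (ht : 0 ≤ t) {u : ℝ → Fin (m + 1) → ℝ}
    (hmeas : ∀ i, Measurable fun τ => u τ i) (hu0 : ∀ τ, u τ 0 = 1)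
    (hbound : ∀ τ ∈ Set.Icc (0:ℝ) t, ∀ i : Fin (m + 1), i ≠ 0 → u τ i ∈ Set.Icc a b)
    (i : Fin (m + 1)) : IntervalIntegrable (fun τ => u τ i) MeasureTheory.volume 0 t := by
  rw [intervalIntegrable_iff_integrableOn_Icc_of_le ht]
  refine MeasureTheory.IntegrableOn.of_bound (by simp)
    (hmeas i).aestronglyMeasurable (max (max |a| |b|) 1) ?_
  refine (MeasureTheory.ae_restrict_iff' measurableSet_Icc).2 (.of_forall fun τ hτ => ?_)
  rw [Real.norm_eq_abs]
  by_cases hi : i = 0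
  · simp [hi, hu0]
  · exact (abs_le_max_abs_abs (hbound τ hτ i hi).1 (hbound τ hτ i hi).2).trans (le_max_left _ _)

lemma iterInt_continuousOn {m : ℕ} {a b t : ℝ} (ht : 0 ≤ t) {u : ℝ → Fin (m + 1) → ℝ}
    (hmeas : ∀ i, Measurable fun τ => u τ i) (hu0 : ∀ τ, u τ 0 = 1)
    (hbound : ∀ τ ∈ Set.Icc (0:ℝ) t, ∀ i : Fin (m + 1), i ≠ 0 → u τ i ∈ Set.Icc a b)
    (η : List (Fin (m + 1))) : ContinuousOn (iterInt m u η) (Set.Icc 0 t) := by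
  induction η with
  | nil => exact continuousOn_const
  | cons i η ih =>
    rw [← Set.uIcc_of_le ht] at ih ⊢
    have hint := (input_intervalIntegrable ht hmeas hu0 hbound i).mul_continuousOn ih
    exact intervalIntegral.continuousOn_primitive_interval' hint Set.left_mem_uIcc

/-- Every iterated integral is an element of the interval power of its word times the iterated
integral of the constant input `1`. -/
lemma exists_mem_intervalPow {m : ℕ} {a b t : ℝ} (hab : a ≤ b) (ht : 0 ≤ t)
    {u : ℝ → Fin (m + 1) → ℝ}
    (hmeas : ∀ i, Measurable fun τ => u τ i) (hu0 : ∀ τ, u τ 0 = 1)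
    (hbound : ∀ τ ∈ Set.Icc (0:ℝ) t, ∀ i : Fin (m + 1), i ≠ 0 → u τ i ∈ Set.Icc a b)
    (η : List (Fin (m + 1))) : ∀ s ∈ Set.Icc (0:ℝ) t,
      ∃ p ∈ intervalPow a b (η.length - η.count 0),
        iterInt m u η s = p * (s ^ η.length / (Nat.factorial η.length : ℝ)) := by
  induction η with
  | nil =>
    intro s _
    exact ⟨1, ⟨fun _ => a, fun i => i.elim0, Fin.prod_univ_zero (fun _ : Fin 0 => a)⟩, by simp [iterInt]⟩
  | cons i η ih =>
    intro s hs
    set P := intervalPow a b ((i :: η).length - (i :: η).count 0) with hP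
    have hPc : IsCompact P := isCompact_intervalPow _ _ _
    have hPne : P.Nonempty := intervalPow_nonempty hab _
    obtain ⟨l, hl⟩ := hPc.exists_isLeast hPne
    obtain ⟨g, hg⟩ := hPc.exists_isGreatest hPne
    have hsub : Set.Icc (0:ℝ) s ⊆ Set.Icc 0 t := Set.Icc_subset_Icc_right hs.2
    have hint : IntervalIntegrable (fun τ => u τ i * iterInt m u η τ)
        MeasureTheory.volume 0 s := by
      refine (input_intervalIntegrable hs.1 hmeas hu0
        (fun τ hτ => hbound τ (hsub hτ)) i).mul_continuousOn ?_
      rw [Set.uIcc_of_le hs.1]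
      exact (iterInt_continuousOn ht hmeas hu0 hbound η).mono hsub
    have hpow : ∀ k : ℝ, (∫ τ in (0:ℝ)..s, k * (τ ^ η.length / (Nat.factorial η.length : ℝ)))
        = k * (s ^ (i :: η).length / (Nat.factorial (i :: η).length : ℝ)) := by
      intro k
      rw [intervalIntegral.integral_const_mul, intervalIntegral.integral_div, integral_pow,
        List.length_cons, Nat.factorial_succ]
      push_cast
      field_simp
      simp
    have hpowint : ∀ k : ℝ, IntervalIntegrable
        (fun τ : ℝ => k * (τ ^ η.length / (Nat.factorial η.length : ℝ)))
        MeasureTheory.volume 0 s := fun k =>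
      Continuous.intervalIntegrable (by fun_prop) _ _
    have hpt : ∀ τ ∈ Set.Icc (0:ℝ) s,
        l * (τ ^ η.length / (Nat.factorial η.length : ℝ)) ≤ u τ i * iterInt m u η τ ∧
        u τ i * iterInt m u η τ ≤ g * (τ ^ η.length / (Nat.factorial η.length : ℝ)) := by
      intro τ hτ
      obtain ⟨p, hp, hE⟩ := ih τ (hsub hτ)
      have hq : u τ i * p ∈ P := input_mul_mem (hu0 τ) (hbound τ (hsub hτ)) i η hp
      have h0 : 0 ≤ τ ^ η.length / (Nat.factorial η.length : ℝ) :=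
        div_nonneg (pow_nonneg hτ.1 _) (Nat.cast_nonneg _)
      rw [hE, ← mul_assoc]
      exact ⟨mul_le_mul_of_nonneg_right (hl.2 hq) h0, mul_le_mul_of_nonneg_right (hg.2 hq) h0⟩
    have hlow := intervalIntegral.integral_mono_on hs.1 (hpowint l) hint fun τ hτ => (hpt τ hτ).1
    have hupp := intervalIntegral.integral_mono_on hs.1 hint (hpowint g) fun τ hτ => (hpt τ hτ).2
    rw [hpow] at hlow hupp
    change _ ≤ iterInt m u (i :: η) s at hlow
    change iterInt m u (i :: η) s ≤ _ at hupp
    set w : ℝ := s ^ (i :: η).length / (Nat.factorial (i :: η).length : ℝ) with hw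
    have hw0 : 0 ≤ w := div_nonneg (pow_nonneg hs.1 _) (Nat.cast_nonneg _)
    rcases hw0.eq_or_lt with hz | hpos
    -- At `s = 0` the integral vanishes, and any element of the interval power will do.
    · refine ⟨l, hl.1, ?_⟩
      rw [← hz] at hlow hupp ⊢
      linarith
    · refine ⟨iterInt m u (i :: η) s / w, ?_, by field_simp⟩
      exact (ordConnected_intervalPow a b _).out hl.1 hg.1
        ⟨(le_div_iff₀ hpos).2 hlow, (div_le_iff₀ hpos).2 hupp⟩

/-- if the family η ↦ |(c,η)|·(max{|a|,|b|,1})^{|η|}·t^{|η|}/|η|! is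
summable, then the series ∑_η (c̲,η)·t^{|η|}/|η|!, ∑_η (c,η)·E_η[u](t), and
∑_η (c̄,η)·t^{|η|}/|η|! converge absolutely and
∑_η (c̲,η)·t^{|η|}/|η|! ≤ ∑_η (c,η)·E_η[u](t) ≤ ∑_η (c̄,η)·t^{|η|}/|η|!. -/
theorem chenFliess_interval_bounds {m : ℕ} (hm : 1 ≤ m) (a b : ℝ) (hab : a ≤ b)
    (t : ℝ) (ht : 0 ≤ t) (u : ℝ → Fin (m + 1) → ℝ)
    (hmeas : ∀ i, Measurable fun τ => u τ i)
    (hu0 : ∀ τ, u τ 0 = 1)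
    (hbound : ∀ τ ∈ Set.Icc (0:ℝ) t, ∀ i : Fin (m + 1), i ≠ 0 → u τ i ∈ Set.Icc a b)
    (c : List (Fin (m + 1)) → ℝ)
    (hsum : Summable fun η : List (Fin (m + 1)) =>
      |c η| * (max (max |a| |b|) 1) ^ η.length * t ^ η.length /
        (Nat.factorial η.length : ℝ)) :
    (Summable fun η : List (Fin (m + 1)) =>
      |lowCoef a b c η * t ^ η.length / (Nat.factorial η.length : ℝ)|) ∧
    (Summable fun η : List (Fin (m + 1)) => |c η * iterInt m u η t|) ∧
    (Summable fun η : List (Fin (m + 1)) =>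
      |upCoef a b c η * t ^ η.length / (Nat.factorial η.length : ℝ)|) ∧
    (∑' η : List (Fin (m + 1)),
        lowCoef a b c η * t ^ η.length / (Nat.factorial η.length : ℝ))
      ≤ ∑' η : List (Fin (m + 1)), c η * iterInt m u η t ∧
    (∑' η : List (Fin (m + 1)), c η * iterInt m u η t)
      ≤ ∑' η : List (Fin (m + 1)),
          upCoef a b c η * t ^ η.length / (Nat.factorial η.length : ℝ) := by
  have hcomp : ∀ η : List (Fin (m + 1)),
      IsCompact ((fun p => c η * p) '' intervalPow a b (η.length - η.count 0)) := fun η =>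
    (isCompact_intervalPow _ _ _).image (by fun_prop)
  have hne : ∀ η : List (Fin (m + 1)),
      ((fun p => c η * p) '' intervalPow a b (η.length - η.count 0)).Nonempty := fun η =>
    (intervalPow_nonempty hab _).image _
  have hw0 : ∀ η : List (Fin (m + 1)), 0 ≤ t ^ η.length / (Nat.factorial η.length : ℝ) :=
    fun η => div_nonneg (pow_nonneg ht _) (Nat.cast_nonneg _)
  -- All three terms have the form `y * t ^ n / n!` with `y ∈ (c, η) * P_r(a, b)`.
  have hdom : ∀ (η : List (Fin (m + 1))) (y : ℝ),
      y ∈ (fun p => c η * p) '' intervalPow a b (η.length - η.count 0) →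
      |y * t ^ η.length / (Nat.factorial η.length : ℝ)| ≤
        |c η| * (max (max |a| |b|) 1) ^ η.length * t ^ η.length /
          (Nat.factorial η.length : ℝ) := by
    rintro η _ ⟨p, hp, rfl⟩
    have hp' := abs_le_of_mem_intervalPow (Nat.sub_le _ _) hp
    simp only [mul_div_assoc]
    rw [abs_mul, abs_of_nonneg (hw0 η), abs_mul]
    exact mul_le_mul_of_nonneg_right (mul_le_mul_of_nonneg_left hp' (abs_nonneg _)) (hw0 η)
  have hmid : ∀ η : List (Fin (m + 1)),
      ∃ y ∈ (fun p => c η * p) '' intervalPow a b (η.length - η.count 0),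
        c η * iterInt m u η t = y * t ^ η.length / (Nat.factorial η.length : ℝ) := by
    intro η
    obtain ⟨p, hp, hE⟩ := exists_mem_intervalPow hab ht hmeas hu0 hbound η t ⟨ht, le_rfl⟩
    exact ⟨c η * p, ⟨p, hp, rfl⟩, by rw [hE]; ring⟩
  have hsl : Summable fun η : List (Fin (m + 1)) =>
      |lowCoef a b c η * t ^ η.length / (Nat.factorial η.length : ℝ)| :=
    hsum.of_nonneg_of_le (fun _ => abs_nonneg _)
      fun η => hdom η _ ((hcomp η).sInf_mem (hne η))
  have hsu : Summable fun η : List (Fin (m + 1)) =>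
      |upCoef a b c η * t ^ η.length / (Nat.factorial η.length : ℝ)| :=
    hsum.of_nonneg_of_le (fun _ => abs_nonneg _)
      fun η => hdom η _ ((hcomp η).sSup_mem (hne η))
  have hsm : Summable fun η : List (Fin (m + 1)) => |c η * iterInt m u η t| := by
    refine hsum.of_nonneg_of_le (fun _ => abs_nonneg _) fun η => ?_
    obtain ⟨y, hy, hE⟩ := hmid η
    rw [hE]
    exact hdom η y hy
  refine ⟨hsl, hsm, hsu, hsl.of_abs.tsum_le_tsum (fun η => ?_) hsm.of_abs,
    hsm.of_abs.tsum_le_tsum (fun η => ?_) hsu.of_abs⟩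
  · obtain ⟨y, hy, hE⟩ := hmid η
    rw [hE, mul_div_assoc, mul_div_assoc]
    exact mul_le_mul_of_nonneg_right (csInf_le (hcomp η).bddBelow hy) (hw0 η)
  · obtain ⟨y, hy, hE⟩ := hmid η
    rw [hE, mul_div_assoc, mul_div_assoc]
    exact mul_le_mul_of_nonneg_right (le_csSup (hcomp η).bddAbove hy) (hw0 η)
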